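/- arXiv:1410.4315 — 2 statements merged into one kernel-verified Lean document; each statement's English description precedes it below -/
import Mathlib

section
/- Let p ∈ (1,∞). There exists a constant C_p > 0 such that for all n ∈ ℕ and all shifts σ ∈ {0,1}^n, the L_p-discrepancy of the two-dimensional symmetrized digit shifted Hammersley point set with N = 2^{n+1} points satisfies L_{p,N}(R_{n,σ}^{sym}) ≤ C_p · √(log N)/N, independently of σ. -/
open MeasureTheory

/-- The real value of a binary digit. -/
noncomputable def bval (b : Bool) : ℝ := if b then 1 else 0

/-- The two-dimensional digit shifted Hammersley point set with `2^n` points,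
indexed by the digit vectors `t : Fin n → Bool`.  The index `i : Fin n`
corresponds to the digit `t_{i+1}` of the paper. -/
noncomputable def hammersleyShifted (n : ℕ) (σ : Fin n → Bool) (t : Fin n → Bool) : ℝ × ℝ :=
  (∑ i : Fin n, bval (t i) / 2 ^ (n - i.val),
   ∑ i : Fin n, bval (t i != σ i) / 2 ^ (i.val + 1))

/-- Number of points of the (indexed) point set `P` lying in `[0,t₁) × [0,t₂)`. -/
noncomputable def countIn {ι : Type*} [Fintype ι] (P : ι → ℝ × ℝ) (t : ℝ × ℝ) : ℕ :=
  (Finset.univ.filter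
    (fun k => 0 ≤ (P k).1 ∧ (P k).1 < t.1 ∧ 0 ≤ (P k).2 ∧ (P k).2 < t.2)).card

/-- The local discrepancy `D_N(P,t) = A_N([0,t),P)/N - t₁t₂` of an indexed point set. -/
noncomputable def localDisc {ι : Type*} [Fintype ι] (P : ι → ℝ × ℝ) (t : ℝ × ℝ) : ℝ :=
  (countIn P t : ℝ) / (Fintype.card ι) - t.1 * t.2

/-- The `L_p`-discrepancy of an indexed point set. -/
noncomputable def LpDisc (p : ℝ) {ι : Type*} [Fintype ι] (P : ι → ℝ × ℝ) : ℝ :=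
  (∫ t in Set.Icc (0 : ℝ × ℝ) 1, |localDisc P t| ^ p) ^ (1 / p)

/-- One-dimensional `L∞`-normalized Haar function `h_{j,m}`, with `j ∈ ℤ`, `j = -1`
giving the indicator of `[0,1)` and `j ≥ 0` the usual Haar function on `I_{j,m}`. -/
noncomputable def haar1 (j : ℤ) (m : ℕ) (x : ℝ) : ℝ :=
  if j = -1 then (if 0 ≤ x ∧ x < 1 then 1 else 0)
  else if (2 * m : ℝ) / 2 ^ (j.toNat + 1) ≤ x ∧ x < (2 * m + 1 : ℝ) / 2 ^ (j.toNat + 1) then 1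
  else if (2 * m + 1 : ℝ) / 2 ^ (j.toNat + 1) ≤ x ∧ x < (2 * m + 2 : ℝ) / 2 ^ (j.toNat + 1) then -1
  else 0

/-- Two-dimensional (tensor product) Haar function. -/
noncomputable def haar2 (j : ℤ × ℤ) (m : ℕ × ℕ) (x : ℝ × ℝ) : ℝ :=
  haar1 j.1 m.1 x.1 * haar1 j.2 m.2 x.2

/-- One-dimensional dyadic interval `I_{j,m}` (with `I_{-1,0} = [0,1)`). -/
noncomputable def dyadicI (j : ℤ) (m : ℕ) : Set ℝ :=
  if j = -1 then Set.Ico (0 : ℝ) 1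
  else Set.Ico ((m : ℝ) / 2 ^ j.toNat) ((m + 1 : ℝ) / 2 ^ j.toNat)

/-- Haar coefficient `μ_{j,m} = ∫_{[0,1]²} D_N(P,t) h_{j,m}(t) dt` of the local
discrepancy of an indexed point set. -/
noncomputable def haarCoeff {ι : Type*} [Fintype ι] (P : ι → ℝ × ℝ) (j : ℤ × ℤ) (m : ℕ × ℕ) : ℝ :=
  ∫ t in Set.Icc (0 : ℝ × ℝ) 1, localDisc P t * haar2 j m t

/-- Number of zero components of the shift `σ`. -/
noncomputable def zeroCount {n : ℕ} (σ : Fin n → Bool) : ℕ :=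
  (Finset.univ.filter (fun j => σ j = false)).card

/-- The symmetrized digit shifted Hammersley point set `R_{n,σ} ∪ R_{n,σ⊕1}`
with `2^(n+1)` points, indexed by `Bool × (Fin n → Bool)`. -/
noncomputable def hammersleySym (n : ℕ) (σ : Fin n → Bool) :
    Bool × (Fin n → Bool) → ℝ × ℝ :=
  fun bt => if bt.1 then hammersleyShifted n (fun i => !(σ i)) bt.2
            else hammersleyShifted n σ bt.2

/-- The multiset `R_{n,σ} ∪ {(x, 1-y) : (x,y) ∈ R_{n,σ}}` with `2^(n+1)` points
(counted with multiplicity), indexed by `Bool × (Fin n → Bool)`. -/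
noncomputable def hammersleySymTilde (n : ℕ) (σ : Fin n → Bool) :
    Bool × (Fin n → Bool) → ℝ × ℝ :=
  fun bt => if bt.1 then ((hammersleyShifted n σ bt.2).1, 1 - (hammersleyShifted n σ bt.2).2)
            else hammersleyShifted n σ bt.2

/-!
Rescale by `2 ^ n` and fix the first coordinate. In its last binary digit the local discrepancy of
`R_{n,σ}` satisfies a recursion which, besides the discrepancies one level below, contains a drift
of absolute value at most `1 / 2`; the drifts of `σ` and of its complement are opposite, so
symmetrization cancels them. After interpolating the two discrepancies at reflected heights `b + θ`
and `b + (1 - θ)`, with `θ` replaced by `(1 + θ) / 2` or `θ / 2` from level to level, their sum is a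
dyadic martingale in the digits of `b` in which the two values over a common parent differ by at
most `3`. Hoeffding's argument bounds its exponential moment with parameter `l` by
`exp (9 / 8 * l ^ 2 * n)`, uniformly in the first coordinate, and `l = 1 / √(n + 1)` gives all the
moments at the scale `√(n + 1)`.
-/

theorem sum_range_two_mul {M : Type*} [AddCommMonoid M] (f : ℕ → M) (N : ℕ) :
    ∑ k ∈ Finset.range (2 * N), f k = ∑ k ∈ Finset.range N, (f (2 * k) + f (2 * k + 1)) := by
  induction N with
  | zero => simp
  | succ N ih => simp only [Nat.mul_succ, Finset.sum_range_succ, ih, add_assoc]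

theorem exp_add_exp_le (x y : ℝ) :
    Real.exp x + Real.exp y ≤ 2 * Real.exp ((x - y) ^ 2 / 8) * Real.exp ((x + y) / 2) := by
  calc Real.exp x + Real.exp y = 2 * Real.cosh ((x - y) / 2) * Real.exp ((x + y) / 2) := by
        rw [Real.cosh_eq, mul_div_cancel₀ _ two_ne_zero, add_mul, ← Real.exp_add, ← Real.exp_add]
        ring_nf
    _ ≤ 2 * Real.exp (((x - y) / 2) ^ 2 / 2) * Real.exp ((x + y) / 2) := by
        gcongr
        exact Real.cosh_le_exp_half_sq _
    _ = _ := by ring_nf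

theorem integral_prod_le_of_forall_section_le {α β : Type*} [MeasurableSpace α]
    [MeasurableSpace β] {μ : Measure α} {ν : Measure β} [IsProbabilityMeasure μ] [SFinite ν]
    {f : α × β → ℝ} {B : ℝ} (hf : Integrable f (μ.prod ν))
    (hB : ∀ᵐ x ∂μ, ∫ y, f (x, y) ∂ν ≤ B) : ∫ z, f z ∂(μ.prod ν) ≤ B :=
  calc ∫ z, f z ∂(μ.prod ν) = ∫ x, ∫ y, f (x, y) ∂ν ∂μ := integral_prod f hf
    _ ≤ ∫ _, B ∂μ := integral_mono_ae hf.integral_prod_left (integrable_const B) hB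
    _ = B := by simp

theorem comp_natCeil_eqOn {E : Type*} (g : ℕ → E) (k : ℕ) :
    Set.EqOn (fun y : ℝ => g ⌈y⌉₊) (fun _ => g (k + 1)) (Set.Ioc (k : ℝ) (k + 1 : ℕ)) := by
  rintro y ⟨hky, hyk⟩
  have hceil : ⌈y⌉₊ = k + 1 :=
    le_antisymm (Nat.ceil_le.2 hyk) (Nat.lt_ceil.2 hky)
  simp only [hceil]

section CeilStepFunction

variable {E : Type*} [NormedAddCommGroup E] (g : ℕ → E)

theorem intervalIntegrable_comp_natCeil (N : ℕ) :
    IntervalIntegrable (fun y : ℝ => g ⌈y⌉₊) volume 0 N := by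
  rw [← Nat.cast_zero]
  refine IntervalIntegrable.trans_iterate (a := fun k : ℕ => (k : ℝ)) fun k _ => ?_
  refine (intervalIntegrable_const (c := g (k + 1))).congr ?_
  rw [Set.uIoc_of_le (by simp)]
  exact (comp_natCeil_eqOn g k).symm

theorem intervalIntegral_comp_natCeil [NormedSpace ℝ E] [CompleteSpace E] (N : ℕ) :
    ∫ y in (0 : ℝ)..N, g ⌈y⌉₊ = ∑ k ∈ Finset.range N, g (k + 1) := by
  have hpiece (k : ℕ) : ∫ y in (k : ℝ)..(k + 1 : ℕ), g ⌈y⌉₊ = g (k + 1) := by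
    have hle : (k : ℝ) ≤ (k + 1 : ℕ) := by simp
    rw [intervalIntegral.integral_of_le hle,
      setIntegral_congr_fun measurableSet_Ioc (comp_natCeil_eqOn g k),
      ← intervalIntegral.integral_of_le hle]
    simp
  have hint (k : ℕ) :
      IntervalIntegrable (fun y : ℝ => g ⌈y⌉₊) volume (k : ℝ) (k + 1 : ℕ) :=
    (intervalIntegrable_comp_natCeil g (k + 1)).mono_set (by
      rw [Set.uIcc_of_le (by simp), Set.uIcc_of_le (by positivity)]
      exact Set.Icc_subset_Icc (by positivity) le_rfl)
  simpa only [hpiece, Nat.cast_zero] using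
    (intervalIntegral.sum_integral_adjacent_intervals (a := fun k : ℕ => (k : ℝ))
      (n := N) fun k _ => hint k).symm

end CeilStepFunction

section LocalDiscrepancy

variable {ι : Type*} [Fintype ι] (P : ι → ℝ × ℝ)

theorem measurable_localDisc : Measurable (localDisc P) := by
  have hcount (t : ℝ × ℝ) : (countIn P t : ℝ) = ∑ k,
      if 0 ≤ (P k).1 ∧ (P k).1 < t.1 ∧ 0 ≤ (P k).2 ∧ (P k).2 < t.2 then (1 : ℝ) else 0 := by
    rw [countIn, Finset.card_filter]
    push_cast
    rfl
  unfold localDisc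
  simp only [hcount]
  refine Measurable.sub (Measurable.div_const (Finset.measurable_sum _ fun k _ => ?_) _)
    (measurable_fst.mul measurable_snd)
  refine Measurable.ite ?_ measurable_const measurable_const
  measurability

variable {P}

theorem abs_localDisc_le_one {t : ℝ × ℝ} (ht : t ∈ Set.Icc (0 : ℝ × ℝ) 1) :
    |localDisc P t| ≤ 1 := by
  obtain ⟨⟨hx0, hy0⟩, ⟨hx1, hy1⟩⟩ := ht
  have hcount : (countIn P t : ℝ) / Fintype.card ι ≤ 1 :=
    div_le_one_of_le₀ (mod_cast Finset.card_le_univ _) (by positivity)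
  have hcount' : 0 ≤ (countIn P t : ℝ) / Fintype.card ι := by positivity
  have harea : t.1 * t.2 ≤ 1 := mul_le_one₀ hx1 hy0 hy1
  have harea' : 0 ≤ t.1 * t.2 := mul_nonneg hx0 hy0
  rw [localDisc, abs_le]
  constructor <;> linarith

variable (P)

theorem integrableOn_exp_mul_localDisc (c : ℝ) :
    IntegrableOn (fun t => Real.exp (c * localDisc P t)) (Set.Icc (0 : ℝ × ℝ) 1) := by
  refine Measure.integrableOn_of_bounded (M := Real.exp |c|) isCompact_Icc.measure_lt_top.ne
    ((measurable_localDisc P).const_mul c).exp.aestronglyMeasurable ?_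
  filter_upwards [ae_restrict_mem measurableSet_Icc] with t ht
  rw [Real.norm_eq_abs, Real.abs_exp]
  gcongr
  calc c * localDisc P t ≤ |c| * |localDisc P t| := (le_abs_self _).trans_eq (abs_mul _ _)
    _ ≤ |c| := mul_le_of_le_one_right (abs_nonneg c) (abs_localDisc_le_one ht)

variable {P}

theorem integral_exp_localDisc_le_of_section_le {c B : ℝ}
    (hB : ∀ x ∈ Set.Icc (0 : ℝ) 1, ∫ y in (0 : ℝ)..1, Real.exp (c * localDisc P (x, y)) ≤ B) :
    ∫ t in Set.Icc (0 : ℝ × ℝ) 1, Real.exp (c * localDisc P t) ≤ B := by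
  have hint := integrableOn_exp_mul_localDisc P c
  have hsquare : Set.Icc (0 : ℝ × ℝ) 1 = Set.Icc (0 : ℝ) 1 ×ˢ Set.Icc (0 : ℝ) 1 :=
    Set.Icc_prod_eq 0 1
  rw [hsquare, IntegrableOn, Measure.volume_eq_prod, ← Measure.prod_restrict] at hint
  rw [hsquare, Measure.volume_eq_prod, ← Measure.prod_restrict]
  have : IsProbabilityMeasure (volume.restrict (Set.Icc (0 : ℝ) 1)) := ⟨by simp⟩
  refine integral_prod_le_of_forall_section_le hint ?_
  filter_upwards [ae_restrict_mem measurableSet_Icc] with x hx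
  rw [integral_Icc_eq_integral_Ioc, ← intervalIntegral.integral_of_le zero_le_one]
  exact hB x hx

theorem LpDisc_le_of_integral_exp_le {p l B : ℝ} (hp : 0 < p) (hl : 0 < l)
    (hpos : ∫ t in Set.Icc (0 : ℝ × ℝ) 1, Real.exp (l * localDisc P t) ≤ B)
    (hneg : ∫ t in Set.Icc (0 : ℝ × ℝ) 1, Real.exp (-l * localDisc P t) ≤ B) :
    LpDisc p P ≤ p / l * (2 * B) ^ (1 / p) := by
  have hpow (t : ℝ × ℝ) : |localDisc P t| ^ p ≤
      (p / l) ^ p * (Real.exp (l * localDisc P t) + Real.exp (-l * localDisc P t)) := by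
    refine (ProbabilityTheory.rpow_abs_le_mul_max_exp_of_pos _ hp.le hl).trans ?_
    gcongr
    exact max_le_add_of_nonneg (Real.exp_nonneg _) (Real.exp_nonneg _)
  have hintpos := integrableOn_exp_mul_localDisc P l
  have hintneg := integrableOn_exp_mul_localDisc P (-l)
  have hmoment : ∫ t in Set.Icc (0 : ℝ × ℝ) 1, |localDisc P t| ^ p ≤ (p / l) ^ p * (2 * B) := by
    calc _ ≤ ∫ t in Set.Icc (0 : ℝ × ℝ) 1,
          (p / l) ^ p * (Real.exp (l * localDisc P t) + Real.exp (-l * localDisc P t)) :=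
          integral_mono_of_nonneg (.of_forall fun t => by positivity)
            ((hintpos.add hintneg).const_mul _) (.of_forall hpow)
      _ ≤ _ := by
          rw [integral_const_mul, integral_add hintpos hintneg, two_mul]
          gcongr
  have hB : 0 ≤ B := (integral_nonneg fun t => (Real.exp_nonneg _)).trans hpos
  calc LpDisc p P ≤ ((p / l) ^ p * (2 * B)) ^ (1 / p) :=
        Real.rpow_le_rpow (integral_nonneg fun t => by positivity) hmoment (by positivity)
    _ = p / l * (2 * B) ^ (1 / p) := by
        rw [Real.mul_rpow (by positivity) (by positivity), ← Real.rpow_mul (by positivity),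
          mul_one_div_cancel hp.ne', Real.rpow_one]

theorem countIn_bool_prod (P : Bool × ι → ℝ × ℝ) (t : ℝ × ℝ) :
    countIn P t = countIn (fun k => P (true, k)) t + countIn (fun k => P (false, k)) t := by
  simp only [countIn, Finset.card_filter, Fintype.sum_prod_type, Fintype.sum_bool]

end LocalDiscrepancy

namespace Hammersley

variable {n : ℕ}

/-- The integer `2 ^ n * x`, where `x` is the first coordinate of the Hammersley point with
digits `t`. -/
def xIndex (t : Fin n → Bool) : ℕ :=
  ∑ i, (t i).toNat * 2 ^ i.val

/-- The integer `2 ^ n * y`, where `y` is the second coordinate of the Hammersley point with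
digits `t` and shift `σ`. -/
def yIndex (σ t : Fin n → Bool) : ℕ :=
  ∑ i, (t i != σ i).toNat * 2 ^ (n - 1 - i.val)

theorem bval_eq_toNat (d : Bool) : bval d = d.toNat := by
  cases d <;> simp [bval]

theorem hammersleyShifted_eq (σ t : Fin n → Bool) :
    hammersleyShifted n σ t = ((xIndex t : ℝ) / 2 ^ n, (yIndex σ t : ℝ) / 2 ^ n) := by
  simp only [hammersleyShifted, xIndex, yIndex, Nat.cast_sum, Finset.sum_div, bval_eq_toNat]
  congr 1 <;> refine Finset.sum_congr rfl fun i _ => ?_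
  · have hpow : (2 : ℝ) ^ n = 2 ^ (n - i.val) * 2 ^ i.val := by
      rw [← pow_add, Nat.sub_add_cancel i.is_lt.le]
    push_cast
    rw [hpow, mul_div_mul_right _ _ (by positivity)]
  · have hpow : (2 : ℝ) ^ n = 2 ^ (i.val + 1) * 2 ^ (n - 1 - i.val) := by
      rw [← pow_add]
      congr 1
      omega
    push_cast
    rw [hpow, mul_div_mul_right _ _ (by positivity)]

theorem xIndex_snoc (t : Fin n → Bool) (d : Bool) :
    xIndex (Fin.snoc (α := fun _ => Bool) t d) = xIndex t + d.toNat * 2 ^ n := by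
  simp [xIndex, Fin.sum_univ_castSucc]

theorem yIndex_snoc (σ : Fin (n + 1) → Bool) (t : Fin n → Bool) (d : Bool) :
    yIndex σ (Fin.snoc (α := fun _ => Bool) t d) =
      2 * yIndex (Fin.init σ) t + (d != σ (Fin.last n)).toNat := by
  have hpow (i : Fin n) : 2 ^ (n - i.val) = 2 * 2 ^ (n - 1 - i.val) := by
    rw [← pow_succ']
    congr 1
    omega
  simp [yIndex, Fin.sum_univ_castSucc, Fin.init, hpow, Finset.mul_sum, mul_left_comm]

theorem xIndex_lt (t : Fin n → Bool) : xIndex t < 2 ^ n := by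
  induction n with
  | zero => simp [xIndex]
  | succ n ih =>
    have hinit := ih (Fin.init t)
    have hdigit := Bool.toNat_le (t (Fin.last n))
    rw [← Fin.snoc_init_self t, xIndex_snoc, pow_succ]
    nlinarith

/-- The number of points of `R_{n,σ}`, rescaled by `2 ^ n`, in the box `[0, a) × [0, b)`. -/
def boxCount (σ : Fin n → Bool) (a b : ℕ) : ℕ :=
  (Finset.univ.filter fun t => xIndex t < a ∧ yIndex σ t < b).card

theorem countIn_hammersleyShifted (σ : Fin n → Bool) (t : ℝ × ℝ) :
    countIn (hammersleyShifted n σ) t = boxCount σ ⌈2 ^ n * t.1⌉₊ ⌈2 ^ n * t.2⌉₊ := by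
  have hlt (k : ℕ) (z : ℝ) : (k : ℝ) / 2 ^ n < z ↔ k < ⌈2 ^ n * z⌉₊ := by
    rw [div_lt_iff₀' (by positivity), Nat.lt_ceil]
  have hnonneg (k : ℕ) : 0 ≤ (k : ℝ) / 2 ^ n := by positivity
  simp only [countIn, boxCount, hammersleyShifted_eq, hlt, hnonneg, true_and]

theorem countIn_hammersleySym (σ : Fin n → Bool) (t : ℝ × ℝ) :
    countIn (hammersleySym n σ) t =
      boxCount σ ⌈2 ^ n * t.1⌉₊ ⌈2 ^ n * t.2⌉₊ + boxCount σᶜ ⌈2 ^ n * t.1⌉₊ ⌈2 ^ n * t.2⌉₊ := by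
  rw [countIn_bool_prod, add_comm, ← countIn_hammersleyShifted, ← countIn_hammersleyShifted]
  rfl

theorem boxCount_zero_left (σ : Fin n → Bool) (b : ℕ) : boxCount σ 0 b = 0 := by
  simp [boxCount]

theorem boxCount_succ (σ : Fin (n + 1) → Bool) (a b : ℕ) :
    boxCount σ a b = boxCount (Fin.init σ) a ((b + (!σ (Fin.last n)).toNat) / 2) +
      boxCount (Fin.init σ) (a - 2 ^ n) ((b + (σ (Fin.last n)).toNat) / 2) := by
  simp only [boxCount, Finset.card_filter]
  rw [← (Fin.snocEquiv fun _ : Fin (n + 1) => Bool).sum_comp, Fintype.sum_prod_type,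
    Fintype.sum_bool, add_comm]
  simp only [Fin.snocEquiv, Equiv.coe_fn_mk, xIndex_snoc, yIndex_snoc]
  congr 1 <;> refine Finset.sum_congr rfl fun t _ => if_congr ?_ rfl rfl <;>
    cases σ (Fin.last n) <;> simp only [bne_self_eq_false, Bool.false_bne, Bool.true_bne,
      Bool.not_true, Bool.not_false, Bool.toNat_false, Bool.toNat_true] <;> omega

theorem boxCount_of_two_pow_le (σ : Fin n → Bool) {a b : ℕ} (ha : 2 ^ n ≤ a) (hb : b ≤ 2 ^ n) :
    boxCount σ a b = b := by
  induction n generalizing a b with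
  | zero =>
    have ha' : 0 < a := by omega
    rw [pow_zero] at hb
    interval_cases b <;> simp [boxCount, xIndex, yIndex, ha']
  | succ n ih =>
    rw [pow_succ] at ha hb
    rw [boxCount_succ]
    cases σ (Fin.last n) <;> simp only [Bool.not_false, Bool.not_true, Bool.toNat_true,
      Bool.toNat_false] <;> rw [ih _ (by omega) (by omega), ih _ (by omega) (by omega)] <;> omega

theorem boxCount_le_boxCount_succ_right (σ : Fin n → Bool) (a b : ℕ) :
    boxCount σ a b ≤ boxCount σ a (b + 1) :=
  Finset.card_le_card <| Finset.monotone_filter_right _ fun _ _ h => ⟨h.1, h.2.trans b.lt_succ_self⟩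

theorem boxCount_succ_right_le (σ : Fin n → Bool) (a : ℕ) {b : ℕ} (hb : b < 2 ^ n) :
    boxCount σ a (b + 1) ≤ boxCount σ a b + 1 := by
  have hstrip : boxCount σ a (b + 1) + boxCount σ (2 ^ n) b ≤
      boxCount σ a b + boxCount σ (2 ^ n) (b + 1) := by
    simp only [boxCount, Finset.card_filter, xIndex_lt, true_and, ← Finset.sum_add_distrib]
    refine Finset.sum_le_sum fun t _ => ?_
    split_ifs <;> omega
  rw [boxCount_of_two_pow_le σ le_rfl hb.le, boxCount_of_two_pow_le σ le_rfl hb] at hstrip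
  omega

theorem boxCount_add_toNat_mul_two_pow (σ : Fin (n + 1) → Bool) (h : Bool) {a b : ℕ}
    (ha : a ≤ 2 ^ n) (hb : b ≤ 2 ^ (n + 1)) :
    boxCount σ (a + h.toNat * 2 ^ n) b = h.toNat * ((b + (!σ (Fin.last n)).toNat) / 2) +
      boxCount (Fin.init σ) a ((b + (σ (Fin.last n) == h).toNat) / 2) := by
  have hdigit := Bool.toNat_le (!σ (Fin.last n))
  cases h
  · simp only [boxCount_succ σ, Bool.toNat_false, zero_mul, add_zero, zero_add,
      Nat.sub_eq_zero_of_le ha, boxCount_zero_left, beq_false]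
  · rw [boxCount_succ, boxCount_of_two_pow_le _ (by simp) (by omega)]
    simp only [Bool.toNat_true, one_mul, Nat.add_sub_cancel, beq_true]

/-- The local discrepancy of `R_{n,σ}` at `(a / 2 ^ n, b / 2 ^ n)`, multiplied by `2 ^ n`. -/
noncomputable def boxDisc (σ : Fin n → Bool) (a b : ℕ) : ℝ :=
  boxCount σ a b - a * b / 2 ^ n

theorem abs_boxDisc_succ_sub_le_one (σ : Fin n → Bool) {a b : ℕ} (ha : a ≤ 2 ^ n)
    (hb : b < 2 ^ n) : |boxDisc σ a (b + 1) - boxDisc σ a b| ≤ 1 := by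
  have hlow : (boxCount σ a b : ℝ) ≤ boxCount σ a (b + 1) :=
    mod_cast boxCount_le_boxCount_succ_right σ a b
  have hup : (boxCount σ a (b + 1) : ℝ) ≤ boxCount σ a b + 1 :=
    mod_cast boxCount_succ_right_le σ a hb
  have hratio : (a : ℝ) / 2 ^ n ≤ 1 := div_le_one_of_le₀ (mod_cast ha) (by positivity)
  have hratio' : 0 ≤ (a : ℝ) / 2 ^ n := by positivity
  have hdiff : boxDisc σ a (b + 1) - boxDisc σ a b =
      boxCount σ a (b + 1) - boxCount σ a b - a / 2 ^ n := by
    simp only [boxDisc]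
    push_cast
    ring
  rw [hdiff, abs_le]
  constructor <;> linarith

theorem boxDisc_two_mul (σ : Fin (n + 1) → Bool) (h : Bool) {a b : ℕ} (ha : a ≤ 2 ^ n)
    (hb : b ≤ 2 ^ n) :
    boxDisc σ (a + h.toNat * 2 ^ n) (2 * b) = boxDisc (Fin.init σ) a b := by
  have hhalf (d : Bool) : (2 * b + d.toNat) / 2 = b := by
    have := Bool.toNat_le d
    omega
  rw [boxDisc, boxCount_add_toNat_mul_two_pow σ h ha (by omega), hhalf, hhalf, boxDisc]
  push_cast
  field_simp
  ring

theorem boxDisc_two_mul_add_one_of_last_eq (σ : Fin (n + 1) → Bool) {h : Bool}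
    (hσ : σ (Fin.last n) = h) {a b : ℕ} (ha : a ≤ 2 ^ n) (hb : b < 2 ^ n) :
    boxDisc σ (a + h.toNat * 2 ^ n) (2 * b + 1) =
      boxDisc (Fin.init σ) a (b + 1) + (a / 2 ^ n - h.toNat) / 2 := by
  have hlow : h.toNat * ((2 * b + 1 + (!h).toNat) / 2) = h.toNat * b := by
    cases h <;> simp only [Bool.toNat_false, Bool.toNat_true, Bool.not_true] <;> omega
  have hhigh : (2 * b + 1 + (h == h).toNat) / 2 = b + 1 := by
    rw [beq_self_eq_true, Bool.toNat_true]
    omega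
  rw [boxDisc, boxCount_add_toNat_mul_two_pow σ h ha (by omega), hσ, hlow, hhigh, boxDisc]
  push_cast
  field_simp
  ring

theorem boxDisc_two_mul_add_one_of_last_ne (σ : Fin (n + 1) → Bool) {h : Bool}
    (hσ : σ (Fin.last n) = !h) {a b : ℕ} (ha : a ≤ 2 ^ n) (hb : b < 2 ^ n) :
    boxDisc σ (a + h.toNat * 2 ^ n) (2 * b + 1) =
      boxDisc (Fin.init σ) a b - (a / 2 ^ n - h.toNat) / 2 := by
  have hlow : h.toNat * ((2 * b + 1 + h.toNat) / 2) = h.toNat * (b + 1) := by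
    cases h <;> simp only [Bool.toNat_false, Bool.toNat_true] <;> omega
  have hhigh : (2 * b + 1 + ((!h) == h).toNat) / 2 = b := by
    rw [Bool.not_beq_self, Bool.toNat_false]
    omega
  rw [boxDisc, boxCount_add_toNat_mul_two_pow σ h ha (by omega), hσ, Bool.not_not, hlow, hhigh,
    boxDisc]
  push_cast
  field_simp
  ring

/-- The sum of `boxDisc σ`, interpolated linearly at height `b + θ`, and `boxDisc σᶜ`,
interpolated at the reflected height `b + (1 - θ)`. A suitable choice of `θ` at every level makes
it a martingale in the binary digits of `b`. -/
noncomputable def symDisc (σ : Fin n → Bool) (θ : ℝ) (a b : ℕ) : ℝ :=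
  (1 - θ) * boxDisc σ a b + θ * boxDisc σ a (b + 1) +
    (θ * boxDisc σᶜ a b + (1 - θ) * boxDisc σᶜ a (b + 1))

theorem symDisc_compl (σ : Fin n → Bool) (θ : ℝ) (a b : ℕ) :
    symDisc σᶜ (1 - θ) a b = symDisc σ θ a b := by
  simp only [symDisc, compl_compl]
  ring

theorem symDisc_two_mul_add_of_last_eq (σ : Fin (n + 1) → Bool) {h : Bool}
    (hσ : σ (Fin.last n) = h) (θ : ℝ) {a b : ℕ} (ha : a ≤ 2 ^ n) (hb : b < 2 ^ n) :
    symDisc σ θ (a + h.toNat * 2 ^ n) (2 * b) + symDisc σ θ (a + h.toNat * 2 ^ n) (2 * b + 1) =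
      2 * symDisc (Fin.init σ) ((1 + θ) / 2) a b := by
  have hσ' : σᶜ (Fin.last n) = !h := by simp [hσ]
  have hinit : Fin.init σᶜ = (Fin.init σ)ᶜ := rfl
  have hcarry : 2 * b + 1 + 1 = 2 * (b + 1) := rfl
  simp only [symDisc, hcarry, boxDisc_two_mul _ _ ha hb.le, boxDisc_two_mul _ _ ha hb,
    boxDisc_two_mul_add_one_of_last_eq σ hσ ha hb, boxDisc_two_mul_add_one_of_last_ne _ hσ' ha hb,
    hinit]
  ring

theorem abs_half_div_sub_toNat_le (h : Bool) {a : ℕ} (ha : a ≤ 2 ^ n) :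
    |((a : ℝ) / 2 ^ n - h.toNat) / 2| ≤ 1 / 2 := by
  have hratio : (a : ℝ) / 2 ^ n ≤ 1 := div_le_one_of_le₀ (mod_cast ha) (by positivity)
  have hratio' : 0 ≤ (a : ℝ) / 2 ^ n := by positivity
  have hdigit : (h.toNat : ℝ) ≤ 1 := mod_cast Bool.toNat_le h
  rw [abs_le]
  constructor <;> linarith

theorem abs_symDisc_two_mul_sub_le_of_last_eq (σ : Fin (n + 1) → Bool) {h : Bool}
    (hσ : σ (Fin.last n) = h) {θ : ℝ} (hθ : θ ∈ Set.Icc 0 1) {a b : ℕ} (ha : a ≤ 2 ^ n)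
    (hb : b < 2 ^ n) :
    |symDisc σ θ (a + h.toNat * 2 ^ n) (2 * b) -
      symDisc σ θ (a + h.toNat * 2 ^ n) (2 * b + 1)| ≤ 3 := by
  have hσ' : σᶜ (Fin.last n) = !h := by simp [hσ]
  have hinit : Fin.init σᶜ = (Fin.init σ)ᶜ := rfl
  have hcarry : 2 * b + 1 + 1 = 2 * (b + 1) := rfl
  set u := boxDisc (Fin.init σ) a (b + 1) - boxDisc (Fin.init σ) a b with hu
  set v := boxDisc (Fin.init σ)ᶜ a (b + 1) - boxDisc (Fin.init σ)ᶜ a b with hv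
  set e : ℝ := (a / 2 ^ n - h.toNat) / 2 with he
  have hujump : |u| ≤ 1 := abs_boxDisc_succ_sub_le_one (Fin.init σ) ha hb
  have hvjump : |v| ≤ 1 := abs_boxDisc_succ_sub_le_one (Fin.init σ)ᶜ ha hb
  have hdiff : symDisc σ θ (a + h.toNat * 2 ^ n) (2 * b) -
      symDisc σ θ (a + h.toNat * 2 ^ n) (2 * b + 1) =
        (θ - 1) * (u + v) + (4 * θ - 2) * e := by
    simp only [symDisc, hcarry, boxDisc_two_mul _ _ ha hb.le, boxDisc_two_mul _ _ ha hb,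
      boxDisc_two_mul_add_one_of_last_eq σ hσ ha hb,
      boxDisc_two_mul_add_one_of_last_ne _ hσ' ha hb, hinit, hu, hv, he]
    ring
  have hweight : |θ - 1| ≤ 1 := abs_le.2 ⟨by linarith [hθ.1], by linarith [hθ.2]⟩
  have hweight' : |4 * θ - 2| ≤ 2 := abs_le.2 ⟨by linarith [hθ.1], by linarith [hθ.2]⟩
  calc _ = |(θ - 1) * (u + v) + (4 * θ - 2) * e| := by rw [hdiff]
    _ ≤ |θ - 1| * (|u| + |v|) + |4 * θ - 2| * |e| := by
        refine (abs_add_le _ _).trans ?_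
        rw [abs_mul, abs_mul]
        gcongr
        exact abs_add_le u v
    _ ≤ 1 * (1 + 1) + 2 * (1 / 2) := by
        gcongr
        exact abs_half_div_sub_toNat_le h ha
    _ = 3 := by norm_num

theorem exists_symDisc_parent (σ : Fin (n + 1) → Bool) {θ : ℝ} (hθ : θ ∈ Set.Icc 0 1) {a : ℕ}
    (ha : a ≤ 2 ^ (n + 1)) :
    ∃ θ' ∈ Set.Icc (0 : ℝ) 1, ∃ a' ≤ 2 ^ n, ∀ b < 2 ^ n,
      symDisc σ θ a (2 * b) + symDisc σ θ a (2 * b + 1) = 2 * symDisc (Fin.init σ) θ' a' b ∧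
        |symDisc σ θ a (2 * b) - symDisc σ θ a (2 * b + 1)| ≤ 3 := by
  obtain ⟨h, a', ha', rfl⟩ : ∃ (h : Bool) (a' : ℕ), a' ≤ 2 ^ n ∧ a = a' + h.toNat * 2 ^ n := by
    rcases le_total a (2 ^ n) with hlow | hhigh
    · exact ⟨false, a, hlow, by simp⟩
    · exact ⟨true, a - 2 ^ n, by omega, by simp [hhigh]⟩
  obtain ⟨hθ0, hθ1⟩ := hθ
  rcases Bool.eq_or_eq_not (σ (Fin.last n)) h with hσ | hσ
  · exact ⟨(1 + θ) / 2, ⟨by linarith, by linarith⟩, a', ha', fun b hb =>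
      ⟨symDisc_two_mul_add_of_last_eq σ hσ θ ha' hb,
        abs_symDisc_two_mul_sub_le_of_last_eq σ hσ ⟨hθ0, hθ1⟩ ha' hb⟩⟩
  · have hσ' : σᶜ (Fin.last n) = h := by simp [hσ]
    refine ⟨θ / 2, ⟨by linarith, by linarith⟩, a', ha', fun b hb => ?_⟩
    have hmean := symDisc_two_mul_add_of_last_eq σᶜ hσ' (1 - θ) ha' hb
    have hdiff := abs_symDisc_two_mul_sub_le_of_last_eq σᶜ hσ' (θ := 1 - θ)
      ⟨by linarith, by linarith⟩ ha' hb
    have hparent : (1 + (1 - θ)) / 2 = 1 - θ / 2 := by ring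
    have hinit : Fin.init σᶜ = (Fin.init σ)ᶜ := rfl
    simp only [symDisc_compl, hparent, hinit] at hmean hdiff
    exact ⟨hmean, hdiff⟩

theorem sum_exp_symDisc_le (σ : Fin n → Bool) (l : ℝ) {θ : ℝ} (hθ : θ ∈ Set.Icc 0 1) {a : ℕ}
    (ha : a ≤ 2 ^ n) :
    ∑ b ∈ Finset.range (2 ^ n), Real.exp (l * symDisc σ θ a b) ≤
      2 ^ n * Real.exp (9 / 8 * l ^ 2 * n) := by
  induction n generalizing θ a with
  | zero =>
    rw [pow_zero] at ha
    interval_cases a <;> simp [symDisc, boxDisc, boxCount, xIndex, yIndex]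
  | succ n ih =>
    obtain ⟨θ', hθ', a', ha', hparent⟩ := exists_symDisc_parent σ hθ ha
    have hpair : ∀ b ∈ Finset.range (2 ^ n),
        Real.exp (l * symDisc σ θ a (2 * b)) + Real.exp (l * symDisc σ θ a (2 * b + 1)) ≤
          2 * Real.exp (9 / 8 * l ^ 2) * Real.exp (l * symDisc (Fin.init σ) θ' a' b) := by
      intro b hb
      obtain ⟨hmean, hdiff⟩ := hparent b (Finset.mem_range.1 hb)
      have hsq := sq_le_sq' (abs_le.1 hdiff).1 (abs_le.1 hdiff).2
      refine (exp_add_exp_le _ _).trans ?_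
      rw [← mul_add, ← mul_sub, hmean, mul_pow, mul_div_assoc l, mul_div_cancel_left₀ _ two_ne_zero]
      gcongr
      nlinarith [sq_nonneg l]
    calc ∑ b ∈ Finset.range (2 ^ (n + 1)), Real.exp (l * symDisc σ θ a b)
        = ∑ b ∈ Finset.range (2 ^ n),
            (Real.exp (l * symDisc σ θ a (2 * b)) + Real.exp (l * symDisc σ θ a (2 * b + 1))) := by
          rw [pow_succ', sum_range_two_mul]
      _ ≤ 2 * Real.exp (9 / 8 * l ^ 2) *
            ∑ b ∈ Finset.range (2 ^ n), Real.exp (l * symDisc (Fin.init σ) θ' a' b) := by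
          rw [Finset.mul_sum]
          exact Finset.sum_le_sum hpair
      _ ≤ 2 * Real.exp (9 / 8 * l ^ 2) * (2 ^ n * Real.exp (9 / 8 * l ^ 2 * n)) := by
          gcongr
          exact ih (Fin.init σ) hθ' ha'
      _ = 2 ^ (n + 1) * Real.exp (9 / 8 * l ^ 2 * (n + 1 : ℕ)) := by
          push_cast
          rw [mul_add, Real.exp_add, mul_one]
          ring

theorem two_pow_mul_localDisc_hammersleySym (σ : Fin n → Bool) (t : ℝ × ℝ) :
    2 ^ (n + 1) * localDisc (hammersleySym n σ) t =
      boxCount σ ⌈2 ^ n * t.1⌉₊ ⌈2 ^ n * t.2⌉₊ + boxCount σᶜ ⌈2 ^ n * t.1⌉₊ ⌈2 ^ n * t.2⌉₊ -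
        2 * ((2 ^ n * t.1) * (2 ^ n * t.2) / 2 ^ n) := by
  have hcard : (Fintype.card (Bool × (Fin n → Bool)) : ℝ) = 2 ^ (n + 1) := by
    simp [pow_succ']
  rw [localDisc, hcard, countIn_hammersleySym]
  push_cast
  field_simp
  ring

theorem natCeil_mul_natCeil_div_mem_Icc {N : ℕ} {u v : ℝ} (hu : u ∈ Set.Icc (0 : ℝ) N)
    (hv : v ∈ Set.Icc (0 : ℝ) N) :
    (⌈u⌉₊ * ⌈v⌉₊ / N : ℝ) ∈ Set.Icc (u * v / N) (u * v / N + 2) := by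
  obtain ⟨hu0, huN⟩ := hu
  obtain ⟨hv0, hvN⟩ := hv
  have hle := mul_le_mul (Nat.le_ceil u) (Nat.le_ceil v) hv0 (Nat.cast_nonneg _)
  refine ⟨by gcongr, ?_⟩
  have hceilN : (⌈u⌉₊ : ℝ) ≤ N := mod_cast Nat.ceil_le.2 huN
  have hsplit : (⌈u⌉₊ * ⌈v⌉₊ : ℝ) ≤ u * v + 2 * N :=
    calc (⌈u⌉₊ * ⌈v⌉₊ : ℝ) = u * v + ⌈u⌉₊ * (⌈v⌉₊ - v) + v * (⌈u⌉₊ - u) := by ring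
      _ ≤ u * v + N * 1 + N * 1 := by
          gcongr
          · linarith [Nat.le_ceil v]
          · linarith [Nat.ceil_lt_add_one hv0]
          · linarith [Nat.le_ceil u]
          · linarith [Nat.ceil_lt_add_one hu0]
      _ = u * v + 2 * N := by ring
  calc (⌈u⌉₊ * ⌈v⌉₊ / N : ℝ) ≤ (u * v + 2 * N) / N := by gcongr
    _ = u * v / N + 2 * (N / N) := by ring
    _ ≤ u * v / N + 2 := by linarith [div_self_le_one (N : ℝ)]

theorem abs_localDisc_sub_symDisc_le (σ : Fin n → Bool) {x y : ℝ} (hx : x ∈ Set.Icc (0 : ℝ) 1)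
    (hy : y ∈ Set.Ioc (0 : ℝ) 1) :
    |2 ^ (n + 1) * localDisc (hammersleySym n σ) (x, y) -
      symDisc σ 1 ⌈2 ^ n * x⌉₊ (⌈2 ^ n * y⌉₊ - 1)| ≤ 5 := by
  have hscale {z : ℝ} (hz : z ∈ Set.Icc (0 : ℝ) 1) :
      2 ^ n * z ∈ Set.Icc (0 : ℝ) (2 ^ n : ℕ) := by
    push_cast
    exact ⟨by have := hz.1; positivity, mul_le_of_le_one_right (by positivity) hz.2⟩
  have hyscale := hscale ⟨hy.1.le, hy.2⟩
  have harea := natCeil_mul_natCeil_div_mem_Icc (hscale hx) hyscale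
  have hround := Nat.ceil_le.2 (hscale hx).2
  obtain ⟨b, hb⟩ : ∃ b, ⌈2 ^ n * y⌉₊ = b + 1 :=
    Nat.exists_eq_succ_of_ne_zero (Nat.ceil_pos.2 (by have := hy.1; positivity)).ne'
  have hbN : b < 2 ^ n := by
    have := Nat.ceil_le.2 hyscale.2
    omega
  have hjump := abs_boxDisc_succ_sub_le_one σᶜ hround hbN
  rw [two_pow_mul_localDisc_hammersleySym]
  simp only [hb, Nat.add_sub_cancel, symDisc, boxDisc] at harea hjump ⊢
  push_cast at harea hjump ⊢
  rw [abs_le] at *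
  constructor <;> linarith [harea.1, harea.2, hjump.1, hjump.2]

theorem integral_exp_localDisc_hammersleySym_section_le (σ : Fin n → Bool) (l : ℝ) {x : ℝ}
    (hx : x ∈ Set.Icc (0 : ℝ) 1) :
    ∫ y in (0 : ℝ)..1, Real.exp (l * (2 ^ (n + 1) * localDisc (hammersleySym n σ) (x, y))) ≤
      Real.exp (5 * |l| + 9 / 8 * l ^ 2 * n) := by
  set a := ⌈2 ^ n * x⌉₊
  have ha : a ≤ 2 ^ n := Nat.ceil_le.2 (by
    push_cast
    exact mul_le_of_le_one_right (by positivity) hx.2)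
  set g : ℕ → ℝ := fun k => Real.exp (5 * |l|) * Real.exp (l * symDisc σ 1 a (k - 1))
  have hpoint (y : ℝ) (hy : y ∈ Set.Ioc (0 : ℝ) 1) :
      Real.exp (l * (2 ^ (n + 1) * localDisc (hammersleySym n σ) (x, y))) ≤ g ⌈2 ^ n * y⌉₊ := by
    have hmul := mul_le_mul_of_nonneg_left (abs_localDisc_sub_symDisc_le σ hx hy) (abs_nonneg l)
    rw [← abs_mul, mul_sub] at hmul
    simp only [g, ← Real.exp_add]
    gcongr
    linarith [le_abs_self (l * (2 ^ (n + 1) * localDisc (hammersleySym n σ) (x, y)) -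
      l * symDisc σ 1 a (⌈2 ^ n * y⌉₊ - 1))]
  have hg : IntervalIntegrable (fun y : ℝ => g ⌈2 ^ n * y⌉₊) volume 0 1 := by
    have := (intervalIntegrable_comp_natCeil g (2 ^ n)).comp_mul_left (c := 2 ^ n)
    simpa using this
  calc _ ≤ ∫ y in (0 : ℝ)..1, g ⌈2 ^ n * y⌉₊ := by
        rw [intervalIntegral.integral_of_le zero_le_one,
          intervalIntegral.integral_of_le zero_le_one]
        refine integral_mono_of_nonneg (.of_forall fun _ => Real.exp_nonneg _) hg.1 ?_
        filter_upwards [ae_restrict_mem measurableSet_Ioc] with y hy using hpoint y hy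
    _ = (2 ^ n)⁻¹ * ∑ b ∈ Finset.range (2 ^ n), g (b + 1) := by
        rw [← intervalIntegral_comp_natCeil,
          intervalIntegral.integral_comp_mul_left (fun y => g ⌈y⌉₊) (by positivity)]
        simp
    _ ≤ (2 ^ n)⁻¹ * (Real.exp (5 * |l|) * (2 ^ n * Real.exp (9 / 8 * l ^ 2 * n))) := by
        simp only [g, Nat.add_sub_cancel, ← Finset.mul_sum]
        gcongr
        exact sum_exp_symDisc_le σ l ⟨zero_le_one, le_rfl⟩ ha
    _ = Real.exp (5 * |l| + 9 / 8 * l ^ 2 * n) := by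
        rw [Real.exp_add]
        field_simp

theorem integral_exp_localDisc_hammersleySym_le (σ : Fin n → Bool) (l : ℝ) :
    ∫ t in Set.Icc (0 : ℝ × ℝ) 1, Real.exp (l * 2 ^ (n + 1) * localDisc (hammersleySym n σ) t) ≤
      Real.exp (5 * |l| + 9 / 8 * l ^ 2 * n) := by
  refine integral_exp_localDisc_le_of_section_le fun x hx => ?_
  simpa only [mul_assoc] using integral_exp_localDisc_hammersleySym_section_le σ l hx

theorem LpDisc_hammersleySym_le (σ : Fin n → Bool) {p : ℝ} (hp : 0 < p) :
    LpDisc p (hammersleySym n σ) ≤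
      p * (2 * Real.exp (49 / 8)) ^ (1 / p) * Real.sqrt (n + 1 : ℕ) / 2 ^ (n + 1) := by
  set r := Real.sqrt (n + 1 : ℕ)
  have hr : 1 ≤ r := Real.one_le_sqrt.2 (by simp)
  have hbudget : 5 * |r⁻¹| + 9 / 8 * r⁻¹ ^ 2 * n ≤ 49 / 8 := by
    have habs : |r⁻¹| ≤ 1 := by
      rw [abs_of_nonneg (by positivity)]
      exact inv_le_one_of_one_le₀ hr
    have hsq : r⁻¹ ^ 2 * n ≤ 1 := by
      rw [inv_pow, Real.sq_sqrt (Nat.cast_nonneg _), inv_mul_le_one₀ (by positivity)]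
      simp
    linarith
  have hpos := (integral_exp_localDisc_hammersleySym_le σ r⁻¹).trans (Real.exp_le_exp.2 hbudget)
  have hneg : ∫ t in Set.Icc (0 : ℝ × ℝ) 1,
      Real.exp (-(r⁻¹ * 2 ^ (n + 1)) * localDisc (hammersleySym n σ) t) ≤ Real.exp (49 / 8) := by
    rw [← neg_mul]
    refine (integral_exp_localDisc_hammersleySym_le σ (-r⁻¹)).trans (Real.exp_le_exp.2 ?_)
    rwa [abs_neg, neg_sq]
  refine (LpDisc_le_of_integral_exp_le hp (by positivity) hpos hneg).trans_eq ?_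
  field_simp

end Hammersley

theorem statement2_general (p : ℝ) (hp : 0 < p) :
    ∃ C : ℝ, 0 < C ∧ ∀ n : ℕ, ∀ σ : Fin n → Bool,
      LpDisc p (hammersleySym n σ) ≤
        C * Real.sqrt (Real.log ((2 : ℝ) ^ (n + 1))) / 2 ^ (n + 1) := by
  have hlog : 0 < Real.sqrt (Real.log 2) := Real.sqrt_pos.2 (Real.log_pos one_lt_two)
  refine ⟨p * (2 * Real.exp (49 / 8)) ^ (1 / p) / Real.sqrt (Real.log 2),
    div_pos (by positivity) hlog, fun n σ => (Hammersley.LpDisc_hammersleySym_le σ hp).trans_eq ?_⟩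
  rw [Real.log_pow, Real.sqrt_mul (Nat.cast_nonneg _)]
  field_simp

/-- The symmetrized digit shifted Hammersley point set (with `N = 2^(n+1)` points)
has optimal `L_p`-discrepancy `≪ √(log N)/N`, independently of the shift `σ`. -/
theorem statement2 (p : ℝ) (hp : 1 < p) :
    ∃ C : ℝ, 0 < C ∧ ∀ n : ℕ, 0 < n → ∀ σ : Fin n → Bool,
      LpDisc p (hammersleySym n σ) ≤
        C * Real.sqrt (Real.log ((2 : ℝ) ^ (n + 1))) / 2 ^ (n + 1) := by
  obtain ⟨C, hC, hbound⟩ := statement2_general p (zero_lt_one.trans hp)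
  exact ⟨C, hC, fun n _ σ => hbound n σ⟩
end

section
/- Let n ∈ ℕ, σ ∈ {0,1}^n, and let μ_{j,m} be the Haar coefficients of the local discrepancy of the digit shifted Hammersley point set R_{n,σ} with N = 2^n points. If j = (j_1,j_2) ∈ ℕ_0^2 with j_1 + j_2 < n − 1, then |μ_{j,m}| = 2^{−2(n+1)} for all m ∈ D_j. -/
open MeasureTheory

/-!
Integrating the Haar functions `h_{j,m}` turns the Haar coefficient into a sum of products of
Faber–Schauder hat functions over the points, minus the contribution `1 / (16 * 4 ^ (j₁ + j₂))` of
the area `t₁ t₂`. Only the points in the dyadic box `I_{j,m}` contribute. Since the leading digits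
of one coordinate are the trailing digits of the other, rescaling this box to the unit square gives
a Hammersley set with `n - j₁ - j₂ ≥ 2` digits, whose coordinates are translated by at most one
unit of their last place.

On the unit square the hat function is affine on either half, and the leading digit decides which
half. The two leading digits of the coordinates are independent, and each is the trailing digit of
the other coordinate up to the shift. Summing over these two digits cancels all linear terms,
so neither the translation nor the remaining digits matter; what survives is the constant term,
which cancels against the area, and one product whose sign is given by two digits of the shift `σ`.
-/

/-- The real number `0.t₀t₁…tₙ₋₁` in base two, with the further digits replaced by a real tail
`ε`, so that it equals `0.t₀t₁…tₙ₋₁ + ε / 2 ^ n`. -/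
noncomputable def binaryValue {n : ℕ} (t : Fin n → Bool) (ε : ℝ) : ℝ :=
  ∑ i : Fin n, bval (t i) / 2 ^ (i.val + 1) + ε / 2 ^ n

lemma bval_mem_Icc (b : Bool) : bval b ∈ Set.Icc (0 : ℝ) 1 := by
  cases b <;> simp [bval]

lemma bval_add_half_mem_Icc (b : Bool) {w : ℝ} (hw : w ∈ Set.Icc (0 : ℝ) 1) :
    (bval b + w) / 2 ∈ Set.Icc (0 : ℝ) 1 := by
  obtain ⟨hb₀, hb₁⟩ := bval_mem_Icc b
  constructor <;> linarith [hw.1, hw.2]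

lemma binaryValue_eq_add {n : ℕ} (t : Fin n → Bool) (ε : ℝ) :
    binaryValue t ε = binaryValue t 0 + ε / 2 ^ n := by
  simp [binaryValue]

lemma binaryValue_succ {n : ℕ} (t : Fin (n + 1) → Bool) (ε : ℝ) :
    binaryValue t ε = (bval (t 0) + binaryValue (fun i => t i.succ) ε) / 2 := by
  simp only [binaryValue, Fin.sum_univ_succ, Fin.val_zero, Fin.val_succ, pow_succ, ← div_div,
    ← Finset.sum_div]
  ring

lemma binaryValue_succ' {n : ℕ} (t : Fin (n + 1) → Bool) (ε : ℝ) :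
    binaryValue t ε =
      binaryValue (fun i => t i.castSucc) ((bval (t (Fin.last n)) + ε) / 2) := by
  simp only [binaryValue, Fin.sum_univ_castSucc, Fin.val_castSucc, Fin.val_last, pow_succ]
  ring

lemma binaryValue_mem_Icc {n : ℕ} (t : Fin n → Bool) {ε : ℝ} (hε : ε ∈ Set.Icc (0 : ℝ) 1) :
    binaryValue t ε ∈ Set.Icc (0 : ℝ) 1 := by
  induction n with
  | zero => simpa [binaryValue] using hε
  | succ n ih => rw [binaryValue_succ]; exact bval_add_half_mem_Icc _ (ih _)

/-- The digit shifted Hammersley point set with both binary expansions continued by fixed tails,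
that is, `hammersleyShifted n σ` translated by `(ε / 2 ^ n, δ / 2 ^ n)`. This is the form taken
by the points of a Hammersley set in a dyadic box after the box is rescaled to the unit square. -/
noncomputable def translatedHammersley {n : ℕ} (σ : Fin n → Bool) (ε δ : ℝ)
    (t : Fin n → Bool) : ℝ × ℝ :=
  (binaryValue (fun i => t i.rev) ε, binaryValue (fun i => t i != σ i) δ)

lemma translatedHammersley_eq_add {n : ℕ} (σ : Fin n → Bool) (ε δ : ℝ) (t : Fin n → Bool) :
    translatedHammersley σ ε δ t = hammersleyShifted n σ t + (ε / 2 ^ n, δ / 2 ^ n) := by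
  have reindex : ∑ i : Fin n, bval (t i.rev) / 2 ^ (i.val + 1) =
      ∑ i : Fin n, bval (t i) / 2 ^ (n - i.val) := by
    rw [← Equiv.sum_comp Fin.revPerm]
    refine Finset.sum_congr rfl fun i _ => ?_
    have weight : (Fin.rev i).val + 1 = n - i.val := by rw [Fin.val_rev]; omega
    rw [Fin.revPerm_apply, Fin.rev_rev, weight]
  simp only [translatedHammersley, binaryValue, hammersleyShifted, reindex, Prod.mk_add_mk]

lemma sum_eq_sum_snoc {n : ℕ} {α M : Type*} [Fintype α] [AddCommMonoid M]
    (f : (Fin (n + 1) → α) → M) :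
    ∑ t, f t = ∑ s : Fin n → α, ∑ a, f (Fin.snoc s a) := by
  rw [← (Fin.snocEquiv fun _ => α).sum_comp, Fintype.sum_prod_type_right]
  rfl

lemma sum_eq_sum_cons {n : ℕ} {α M : Type*} [Fintype α] [AddCommMonoid M]
    (f : (Fin (n + 1) → α) → M) :
    ∑ t, f t = ∑ s : Fin n → α, ∑ a, f (Fin.cons a s) := by
  rw [← (Fin.consEquiv fun _ => α).sum_comp, Fintype.sum_prod_type_right]
  rfl

/-- The Faber–Schauder hat function of peak `1 / 2` supported on the dyadic interval `I_{j,m}`.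
Up to the factor `2 ^ j` it is the primitive of the Haar function `h_{j,m}`. -/
noncomputable def schauder (j m : ℕ) (x : ℝ) : ℝ :=
  max 0 (min (2 ^ j * x - m) (m + 1 - 2 ^ j * x))

lemma schauder_zero_bval_add (b : Bool) {w : ℝ} (hw : w ∈ Set.Icc (0 : ℝ) 1) :
    schauder 0 0 ((bval b + w) / 2) = 1 / 4 + (-1) ^ b.toNat * (2 * w - 1) / 4 := by
  obtain ⟨hw₀, hw₁⟩ := hw
  cases b
  · rw [schauder, min_eq_left, max_eq_right] <;> simp [bval] <;> linarith
  · rw [schauder, min_eq_right, max_eq_right] <;> simp [bval] <;> linarith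

lemma schauder_succ_bval_add (j : ℕ) {m : ℕ} (hm : m < 2 ^ j) (b c : Bool) {w : ℝ}
    (hw : w ∈ Set.Icc (0 : ℝ) 1) :
    schauder (j + 1) (c.toNat * 2 ^ j + m) ((bval b + w) / 2) =
      if b = c then schauder j m w else 0 := by
  have hm' : (m : ℝ) + 1 ≤ 2 ^ j := by exact_mod_cast hm
  have hwj₀ : 0 ≤ 2 ^ j * w := mul_nonneg (by positivity) hw.1
  have hwj₁ : 2 ^ j * w ≤ 2 ^ j := mul_le_of_le_one_right (by positivity) hw.2
  have rescale : (2 : ℝ) ^ (j + 1) * ((bval b + w) / 2) = bval b * 2 ^ j + 2 ^ j * w := by ring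
  unfold schauder
  rw [rescale]
  cases b <;> cases c
  · simp [bval]
  · simp only [bval, Bool.toNat_true, Bool.false_eq_true, if_false]
    push_cast
    rw [max_eq_left (min_le_of_left_le (by linarith))]
  · simp only [bval, Bool.toNat_false, Bool.true_eq_false, if_true, if_false]
    push_cast
    rw [max_eq_left (min_le_of_right_le (by linarith))]
  · simp only [bval, Bool.toNat_true, if_true]
    push_cast
    ring_nf

/-- The sum over an indexed point set of the tensor product Faber–Schauder function with index
`(j, m)`, which governs the Haar coefficient of the same index. -/
noncomputable def schauderSum {ι : Type*} [Fintype ι] (P : ι → ℝ × ℝ) (j m : ℕ × ℕ) : ℝ :=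
  ∑ k, schauder j.1 m.1 (P k).1 * schauder j.2 m.2 (P k).2

/-- The digit vector `t` on the left corresponds to the reversal of `t ⊕ σ` on the right. -/
lemma schauderSum_translatedHammersley_swap {n : ℕ} (σ : Fin n → Bool) (ε δ : ℝ) (j m : ℕ × ℕ) :
    schauderSum (translatedHammersley σ ε δ) j m =
      schauderSum (translatedHammersley (fun i => σ i.rev) δ ε) j.swap m.swap := by
  have involutive : Function.Involutive fun (t : Fin n → Bool) i => (t i != σ i) :=
    fun t => by funext i; simp
  unfold schauderSum
  rw [← Equiv.sum_comp ((Fin.revPerm.arrowCongr (Equiv.refl Bool)).trans involutive.toPerm)]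
  refine Finset.sum_congr rfl fun t _ => ?_
  rw [mul_comm]
  simp [translatedHammersley]

lemma translatedHammersley_snoc {n : ℕ} (σ : Fin (n + 1) → Bool) (ε δ : ℝ) (t : Fin n → Bool)
    (b : Bool) :
    translatedHammersley σ ε δ (Fin.snoc t b) =
      ((bval b + binaryValue (fun i => t i.rev) ε) / 2,
        binaryValue (fun i => t i != σ i.castSucc) ((bval (b != σ (Fin.last n)) + δ) / 2)) := by
  rw [translatedHammersley, binaryValue_succ, binaryValue_succ']
  simp [Fin.rev_succ]

lemma schauderSum_translatedHammersley_succ {n : ℕ} (σ : Fin (n + 1) → Bool) {ε : ℝ}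
    (hε : ε ∈ Set.Icc (0 : ℝ) 1) (δ : ℝ) (j₁ j₂ : ℕ) {m₁ : ℕ} (hm₁ : m₁ < 2 ^ j₁) (m₂ : ℕ)
    (c : Bool) :
    schauderSum (translatedHammersley σ ε δ) (j₁ + 1, j₂) (c.toNat * 2 ^ j₁ + m₁, m₂) =
      schauderSum (translatedHammersley (fun i => σ i.castSucc) ε
        ((bval (c != σ (Fin.last n)) + δ) / 2)) (j₁, j₂) (m₁, m₂) := by
  unfold schauderSum
  rw [sum_eq_sum_snoc]
  refine Finset.sum_congr rfl fun t _ => ?_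
  simp only [translatedHammersley_snoc, ite_mul, zero_mul,
    schauder_succ_bval_add j₁ hm₁ _ c (binaryValue_mem_Icc _ hε), Finset.sum_ite_eq',
    Finset.mem_univ, if_true]
  rfl

lemma exists_schauderSum_translatedHammersley_eq {n : ℕ} (j₁ j₂ : ℕ) (σ : Fin (n + j₁) → Bool)
    {ε δ : ℝ} (hε : ε ∈ Set.Icc (0 : ℝ) 1) (hδ : δ ∈ Set.Icc (0 : ℝ) 1) {m₁ : ℕ}
    (hm₁ : m₁ < 2 ^ j₁) (m₂ : ℕ) :
    ∃ δ' ∈ Set.Icc (0 : ℝ) 1, schauderSum (translatedHammersley σ ε δ) (j₁, j₂) (m₁, m₂) =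
      schauderSum (translatedHammersley (fun i => σ (Fin.castAdd j₁ i)) ε δ') (0, j₂) (0, m₂) := by
  induction j₁ generalizing δ m₁ with
  | zero => exact ⟨δ, hδ, by rw [Nat.lt_one_iff.mp hm₁]; rfl⟩
  | succ j₁ ih =>
    obtain ⟨c, m, hm, rfl⟩ : ∃ (c : Bool) (m : ℕ), m < 2 ^ j₁ ∧ c.toNat * 2 ^ j₁ + m = m₁ := by
      rcases lt_or_ge m₁ (2 ^ j₁) with h | h
      · exact ⟨false, m₁, h, by simp⟩
      · exact ⟨true, m₁ - 2 ^ j₁, by omega, by simp [h]⟩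
    have hδc := bval_add_half_mem_Icc (c != σ (Fin.last (n + j₁))) hδ
    obtain ⟨δ', hδ', reduction⟩ := ih (fun i => σ i.castSucc) hδc hm
    exact ⟨δ', hδ', (schauderSum_translatedHammersley_succ σ hε δ j₁ j₂ hm m₂ c).trans reduction⟩

/-- The linear terms cancel against the signs, which leaves the product of the two quantities
`∑ a, (-1) ^ a * a = -1`. -/
lemma sum_signed_digits (c d : Bool) (x y ε δ q : ℝ) :
    ∑ b : Bool, ∑ a : Bool,
      (1 / 4 + (-1) ^ b.toNat * (x + (bval a + ε) * q)) *
        (1 / 4 + (-1) ^ (a != c).toNat * (y + (bval (b != d) + δ) * q)) =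
      1 / 4 + (-1) ^ (c.toNat + d.toNat) * q ^ 2 := by
  cases c <;> cases d <;> simp [bval] <;> ring

lemma schauder_zero_binaryValue {n : ℕ} (t : Fin (n + 2) → Bool) {ε : ℝ}
    (hε : ε ∈ Set.Icc (0 : ℝ) 1) :
    schauder 0 0 (binaryValue t ε) = 1 / 4 + (-1) ^ (t 0).toNat *
      ((2 * binaryValue (fun i : Fin n => t i.castSucc.succ) 0 - 1) / 4 +
        (bval (t (Fin.last (n + 1))) + ε) * (1 / 2 ^ (n + 2))) := by
  rw [binaryValue_succ, schauder_zero_bval_add _ (binaryValue_mem_Icc _ hε), binaryValue_succ',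
    binaryValue_eq_add, Fin.succ_last]
  ring

lemma schauderSum_translatedHammersley_zero (k : ℕ) (σ : Fin (k + 2) → Bool) {ε δ : ℝ}
    (hε : ε ∈ Set.Icc (0 : ℝ) 1) (hδ : δ ∈ Set.Icc (0 : ℝ) 1) :
    schauderSum (translatedHammersley σ ε δ) (0, 0) (0, 0) =
      2 ^ k / 4 + (-1) ^ ((σ 0).toNat + (σ (Fin.last (k + 1))).toNat) / 2 ^ (k + 4) := by
  have sum_outer_digits (s : Fin k → Bool) : ∑ b, ∑ a,
      schauder 0 0 (translatedHammersley σ ε δ (Fin.cons a (Fin.snoc s b : Fin (k + 1) → Bool))).1 *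
      schauder 0 0 (translatedHammersley σ ε δ (Fin.cons a (Fin.snoc s b : Fin (k + 1) → Bool))).2 =
        1 / 4 + (-1) ^ ((σ 0).toNat + (σ (Fin.last (k + 1))).toNat) * (1 / 2 ^ (k + 2)) ^ 2 := by
    rw [← sum_signed_digits (σ 0) (σ (Fin.last (k + 1)))
      ((2 * binaryValue (fun i => s i.rev) 0 - 1) / 4)
      ((2 * binaryValue (fun i => s i != σ i.castSucc.succ) 0 - 1) / 4) ε δ]
    simp only [translatedHammersley, schauder_zero_binaryValue _ hε, schauder_zero_binaryValue _ hδ]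
    simp [Fin.rev_succ, Fin.rev_castSucc, ← Fin.succ_last]
  have weight : (2 : ℝ) ^ k * (1 / 2 ^ (k + 2)) ^ 2 = 1 / 2 ^ (k + 4) := by
    simp only [pow_add]
    field_simp
  unfold schauderSum
  rw [sum_eq_sum_cons, sum_eq_sum_snoc]
  simp only [sum_outer_digits, Finset.sum_const, Finset.card_univ, Fintype.card_fun,
    Fintype.card_bool, Fintype.card_fin, nsmul_eq_mul]
  push_cast
  linear_combination (-1) ^ ((σ 0).toNat + (σ (Fin.last (k + 1))).toNat) * weight

lemma schauderSum_translatedHammersley {n : ℕ} (σ : Fin n → Bool) {ε δ : ℝ}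
    (hε : ε ∈ Set.Icc (0 : ℝ) 1) (hδ : δ ∈ Set.Icc (0 : ℝ) 1) {j₁ j₂ : ℕ} (hj : j₁ + j₂ + 1 < n)
    {m₁ m₂ : ℕ} (hm₁ : m₁ < 2 ^ j₁) (hm₂ : m₂ < 2 ^ j₂) :
    schauderSum (translatedHammersley σ ε δ) (j₁, j₂) (m₁, m₂) =
      2 ^ n / (16 * 2 ^ (j₁ + j₂)) +
        (-1) ^ ((σ (Fin.rev ⟨j₁, by omega⟩)).toNat + (σ ⟨j₂, by omega⟩).toNat) *
          2 ^ (j₁ + j₂) / (4 * 2 ^ n) := by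
  obtain ⟨k, rfl⟩ : ∃ k, n = k + 2 + j₂ + j₁ := ⟨n - (j₁ + j₂ + 2), by omega⟩
  obtain ⟨δ', hδ', reduce₁⟩ := exists_schauderSum_translatedHammersley_eq j₁ j₂ σ hε hδ hm₁ m₂
  obtain ⟨ε', hε', reduce₂⟩ := exists_schauderSum_translatedHammersley_eq j₂ 0
    (fun i => σ (Fin.castAdd j₁ i.rev)) hδ' hε hm₂ 0
  rw [reduce₁, schauderSum_translatedHammersley_swap, Prod.swap_prod_mk, Prod.swap_prod_mk, reduce₂,
    schauderSum_translatedHammersley_zero k _ hδ' hε']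
  have first : Fin.castAdd j₁ (Fin.castAdd j₂ (0 : Fin (k + 2))).rev = Fin.rev ⟨j₁, by omega⟩ := by
    ext
    simp only [Fin.val_castAdd, Fin.val_rev, Fin.val_zero]
    omega
  have last : Fin.castAdd j₁ (Fin.castAdd j₂ (Fin.last (k + 1))).rev = ⟨j₂, by omega⟩ := by
    ext; simp
  rw [first, last]
  simp only [pow_add]
  field_simp
  ring

lemma dyadicI_natCast (j m : ℕ) :
    dyadicI (j : ℤ) m = Set.Ico ((m : ℝ) / 2 ^ j) ((m + 1 : ℝ) / 2 ^ j) := by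
  have : (j : ℤ) ≠ -1 := by omega
  simp [dyadicI, this]

lemma measurableSet_dyadicI (j : ℤ) (m : ℕ) : MeasurableSet (dyadicI j m) := by
  unfold dyadicI
  split_ifs <;> exact measurableSet_Ico

lemma dyadicI_subset_Icc {j m : ℕ} (hm : m < 2 ^ j) : dyadicI j m ⊆ Set.Icc 0 1 := by
  have hm' : (m : ℝ) + 1 ≤ 2 ^ j := by exact_mod_cast hm
  rw [dyadicI_natCast]
  refine Set.Ico_subset_Icc_self.trans (Set.Icc_subset_Icc (by positivity) ?_)
  exact (div_le_one (by positivity)).mpr hm'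

lemma setIntegral_dyadicI (j m : ℕ) (f : ℝ → ℝ) :
    ∫ t in dyadicI j m, f t = ∫ t in (m : ℝ) / 2 ^ j..(m + 1) / 2 ^ j, f t := by
  rw [dyadicI_natCast, integral_Ico_eq_integral_Ioc,
    intervalIntegral.integral_of_le (by gcongr; linarith)]

lemma haar1_natCast_eq_indicator_sub (j m : ℕ) (t : ℝ) :
    haar1 j m t = (dyadicI (j + 1 : ℕ) (2 * m)).indicator 1 t -
      (dyadicI (j + 1 : ℕ) (2 * m + 1)).indicator 1 t := by
  have hj : (j : ℤ) ≠ -1 := by omega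
  rw [dyadicI_natCast, dyadicI_natCast]
  simp only [haar1, hj, if_false, Int.toNat_natCast, Set.indicator, Set.mem_Ico, Pi.one_apply]
  push_cast
  split_ifs <;> grind

lemma mul_haar1_natCast (j m : ℕ) (f : ℝ → ℝ) :
    (fun t => f t * haar1 j m t) = fun t => (dyadicI (j + 1 : ℕ) (2 * m)).indicator f t -
      (dyadicI (j + 1 : ℕ) (2 * m + 1)).indicator f t := by
  funext t
  rw [haar1_natCast_eq_indicator_sub, mul_sub]
  simp [Set.indicator]

lemma integrableOn_mul_haar1 (j m : ℕ) {f : ℝ → ℝ} {s : Set ℝ} (hf : IntegrableOn f s) :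
    IntegrableOn (fun t => f t * haar1 j m t) s := by
  rw [mul_haar1_natCast]
  exact (hf.indicator (measurableSet_dyadicI _ _)).sub (hf.indicator (measurableSet_dyadicI _ _))

lemma integral_mul_haar1 {j m : ℕ} (hm : m < 2 ^ j) {f : ℝ → ℝ}
    (hf : IntegrableOn f (Set.Icc 0 1)) :
    ∫ t in Set.Icc (0 : ℝ) 1, f t * haar1 j m t =
      (∫ t in dyadicI (j + 1 : ℕ) (2 * m), f t) - ∫ t in dyadicI (j + 1 : ℕ) (2 * m + 1), f t := by
  have left_subset : dyadicI (j + 1 : ℕ) (2 * m) ⊆ Set.Icc 0 1 :=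
    dyadicI_subset_Icc (by rw [pow_succ]; omega)
  have right_subset : dyadicI (j + 1 : ℕ) (2 * m + 1) ⊆ Set.Icc 0 1 :=
    dyadicI_subset_Icc (by rw [pow_succ]; omega)
  rw [mul_haar1_natCast, integral_sub (hf.indicator (measurableSet_dyadicI _ _))
    (hf.indicator (measurableSet_dyadicI _ _)), setIntegral_indicator (measurableSet_dyadicI _ _),
    setIntegral_indicator (measurableSet_dyadicI _ _),
    Set.inter_eq_self_of_subset_right left_subset,
    Set.inter_eq_self_of_subset_right right_subset]

lemma setIntegral_dyadicI_id (j m : ℕ) :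
    ∫ t in dyadicI j m, t = (2 * m + 1) / (2 * (2 ^ j) ^ 2) := by
  rw [setIntegral_dyadicI, integral_id]
  field_simp
  ring

lemma integral_id_mul_haar1 {j m : ℕ} (hm : m < 2 ^ j) :
    ∫ t in Set.Icc (0 : ℝ) 1, t * haar1 j m t = -(1 / (4 * (2 ^ j) ^ 2)) := by
  rw [integral_mul_haar1 hm (f := fun t => t) continuous_id.integrableOn_Icc,
    setIntegral_dyadicI_id, setIntegral_dyadicI_id, pow_succ]
  push_cast
  field_simp
  ring

lemma setIntegral_dyadicI_indicator_Ioi (j m : ℕ) (x : ℝ) :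
    ∫ t in dyadicI j m, (Set.Ioi x).indicator 1 t =
      max (m + 1 - max (m : ℝ) (2 ^ j * x)) 0 / 2 ^ j := by
  rw [dyadicI_natCast, integral_Ico_eq_integral_Ioc, setIntegral_indicator measurableSet_Ioi,
    Set.Ioc_inter_Ioi]
  simp only [Pi.one_apply]
  rw [setIntegral_one_eq_measureReal, Real.volume_real_Ioc,
    ← max_div_div_right (by positivity), zero_div, sub_div, ← max_div_div_right (by positivity),
    mul_div_cancel_left₀ _ (by positivity)]

lemma integrableOn_indicator_Ioi (x : ℝ) :
    IntegrableOn ((Set.Ioi x).indicator (1 : ℝ → ℝ)) (Set.Icc 0 1) :=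
  (integrableOn_const (C := (1 : ℝ)) (by simp)).indicator measurableSet_Ioi

lemma integral_indicator_Ioi_mul_haar1 {j m : ℕ} (hm : m < 2 ^ j) (x : ℝ) :
    ∫ t in Set.Icc (0 : ℝ) 1, (Set.Ioi x).indicator 1 t * haar1 j m t =
      -(schauder j m x / 2 ^ j) := by
  have hat (a u : ℝ) : max (2 * a + 1 - max (2 * a) (2 * u)) 0 -
      max (2 * a + 1 + 1 - max (2 * a + 1) (2 * u)) 0 = -(2 * max 0 (min (u - a) (a + 1 - u))) := by
    grind
  have rescale : (2 : ℝ) ^ (j + 1) * x = 2 * (2 ^ j * x) := by ring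
  rw [integral_mul_haar1 hm (integrableOn_indicator_Ioi x), setIntegral_dyadicI_indicator_Ioi,
    setIntegral_dyadicI_indicator_Ioi, schauder, ← sub_div, rescale]
  push_cast
  rw [hat, pow_succ]
  field_simp

lemma integrableOn_Icc_prod_mul {a b : ℝ × ℝ} {f g : ℝ → ℝ}
    (hf : IntegrableOn f (Set.Icc a.1 b.1)) (hg : IntegrableOn g (Set.Icc a.2 b.2)) :
    IntegrableOn (fun z : ℝ × ℝ => f z.1 * g z.2) (Set.Icc a b) := by
  rw [Set.Icc_prod_eq, IntegrableOn, Measure.volume_eq_prod, ← Measure.prod_restrict]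
  exact hf.mul_prod hg

lemma setIntegral_Icc_prod_mul (a b : ℝ × ℝ) (f g : ℝ → ℝ) :
    ∫ z in Set.Icc a b, f z.1 * g z.2 =
      (∫ t in Set.Icc a.1 b.1, f t) * ∫ t in Set.Icc a.2 b.2, g t := by
  rw [Set.Icc_prod_eq, Measure.volume_eq_prod]
  exact setIntegral_prod_mul f g _ _

lemma countIn_eq_sum_indicator {ι : Type*} [Fintype ι] {P : ι → ℝ × ℝ} (hP : ∀ k, 0 ≤ P k)
    (t : ℝ × ℝ) :
    (countIn P t : ℝ) =
      ∑ k, (Set.Ioi (P k).1).indicator 1 t.1 * (Set.Ioi (P k).2).indicator 1 t.2 := by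
  unfold countIn
  rw [Finset.card_filter]
  push_cast
  refine Finset.sum_congr rfl fun k _ => ?_
  have h₁ : 0 ≤ (P k).1 := (hP k).1
  have h₂ : 0 ≤ (P k).2 := (hP k).2
  by_cases h : (P k).1 < t.1 <;> simp [h₁, h₂, h, Set.indicator]

lemma localDisc_mul_haar2 {ι : Type*} [Fintype ι] {P : ι → ℝ × ℝ} (hP : ∀ k, 0 ≤ P k)
    (j : ℤ × ℤ) (m : ℕ × ℕ) (t : ℝ × ℝ) :
    localDisc P t * haar2 j m t =
      (∑ k, (Set.Ioi (P k).1).indicator 1 t.1 * haar1 j.1 m.1 t.1 *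
        ((Set.Ioi (P k).2).indicator 1 t.2 * haar1 j.2 m.2 t.2)) / Fintype.card ι -
      t.1 * haar1 j.1 m.1 t.1 * (t.2 * haar1 j.2 m.2 t.2) := by
  simp only [localDisc, countIn_eq_sum_indicator hP, haar2, mul_mul_mul_comm _ (haar1 _ _ _),
    ← Finset.sum_mul]
  ring

lemma haarCoeff_eq_schauderSum {ι : Type*} [Fintype ι] {P : ι → ℝ × ℝ} (hP : ∀ k, 0 ≤ P k)
    {j₁ j₂ m₁ m₂ : ℕ} (hm₁ : m₁ < 2 ^ j₁) (hm₂ : m₂ < 2 ^ j₂) :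
    haarCoeff P (j₁, j₂) (m₁, m₂) =
      schauderSum P (j₁, j₂) (m₁, m₂) / (2 ^ (j₁ + j₂) * Fintype.card ι) -
        1 / (16 * (2 ^ (j₁ + j₂)) ^ 2) := by
  have integrable_count (k : ι) := integrableOn_Icc_prod_mul (a := 0) (b := 1)
    (integrableOn_mul_haar1 j₁ m₁ (integrableOn_indicator_Ioi (P k).1))
    (integrableOn_mul_haar1 j₂ m₂ (integrableOn_indicator_Ioi (P k).2))
  have integrable_id : IntegrableOn (fun t : ℝ => t) (Set.Icc 0 1) :=
    continuous_id.integrableOn_Icc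
  have integrable_area := integrableOn_Icc_prod_mul (a := 0) (b := 1)
    (integrableOn_mul_haar1 j₁ m₁ integrable_id) (integrableOn_mul_haar1 j₂ m₂ integrable_id)
  have integral_count (k : ι) := setIntegral_Icc_prod_mul 0 1
    (fun t => (Set.Ioi (P k).1).indicator 1 t * haar1 j₁ m₁ t)
    (fun t => (Set.Ioi (P k).2).indicator 1 t * haar1 j₂ m₂ t)
  have integral_area := setIntegral_Icc_prod_mul 0 1
    (fun t => t * haar1 j₁ m₁ t) (fun t => t * haar1 j₂ m₂ t)
  simp only [haarCoeff, localDisc_mul_haar2 hP]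
  rw [integral_sub ((integrable_finsetSum _ fun k _ => integrable_count k).div_const _)
    integrable_area, integral_div, integral_finsetSum _ fun k _ => integrable_count k]
  simp only [integral_count, integral_area, Prod.fst_zero, Prod.snd_zero, Prod.fst_one,
    Prod.snd_one, integral_indicator_Ioi_mul_haar1 hm₁, integral_indicator_Ioi_mul_haar1 hm₂,
    integral_id_mul_haar1 hm₁, integral_id_mul_haar1 hm₂, neg_mul_neg, div_mul_div_comm,
    ← Finset.sum_div, ← pow_add, schauderSum, div_div, one_mul]
  congr 2
  rw [pow_add]
  ring

theorem statement4_general {n : ℕ} (σ : Fin n → Bool) {ε δ : ℝ} (hε : ε ∈ Set.Icc (0 : ℝ) 1)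
    (hδ : δ ∈ Set.Icc (0 : ℝ) 1) {j₁ j₂ : ℕ} (hj : j₁ + j₂ + 1 < n)
    {m₁ m₂ : ℕ} (hm₁ : m₁ < 2 ^ j₁) (hm₂ : m₂ < 2 ^ j₂) :
    haarCoeff (fun t => hammersleyShifted n σ t + (ε / 2 ^ n, δ / 2 ^ n))
        ((j₁ : ℤ), (j₂ : ℤ)) (m₁, m₂) =
      (-1) ^ ((σ (Fin.rev ⟨j₁, by omega⟩)).toNat + (σ ⟨j₂, by omega⟩).toNat) /
        2 ^ (2 * (n + 1)) := by
  have nonneg (t : Fin n → Bool) : 0 ≤ translatedHammersley σ ε δ t :=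
    ⟨(binaryValue_mem_Icc _ hε).1, (binaryValue_mem_Icc _ hδ).1⟩
  have card_points : (Fintype.card (Fin n → Bool) : ℝ) = 2 ^ n := by simp
  rw [← funext (translatedHammersley_eq_add σ ε δ), haarCoeff_eq_schauderSum nonneg hm₁ hm₂,
    schauderSum_translatedHammersley σ hε hδ hj hm₁ hm₂, card_points]
  field_simp
  ring

/-- Haar coefficients of the local discrepancy of `R_{n,σ}` for `j ∈ ℕ₀²`
with `j₁ + j₂ < n - 1`: `|μ_{j,m}| = 2^{-2(n+1)}`. -/
theorem statement4 (n : ℕ) (hn : 0 < n) (σ : Fin n → Bool)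
    (j1 j2 : ℕ) (hj : j1 + j2 + 1 < n)
    (m1 m2 : ℕ) (hm1 : m1 < 2 ^ j1) (hm2 : m2 < 2 ^ j2) :
    |haarCoeff (hammersleyShifted n σ) ((j1 : ℤ), (j2 : ℤ)) (m1, m2)| =
      1 / 2 ^ (2 * (n + 1)) := by
  simpa [abs_div, Prod.mk_zero_zero] using
    congrArg abs (statement4_general σ (ε := 0) (δ := 0) (by simp) (by simp) hj hm1 hm2)
end
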